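/- Let N ≥ 2, let c : ℝ^d × ℝ^d → [0,∞] be Borel measurable, symmetric and lower semi-continuous, and let μ be a Borel probability measure on ℝ^d. Then there exists γ_N ∈ P_sym^N(ℝ^d) with all one-coordinate marginals equal to μ attaining the infimum defining F_N^OT[μ], and there exists an N-representable symmetric probability measure μ₂ on ℝ^d × ℝ^d with both marginals μ such that ∫ c dμ₂ = F_N^OT[μ]. -/

import Mathlib

open MeasureTheory ENNReal Filter Topology ProbabilityTheory

noncomputable section

/-- `ℝ^d` with the Euclidean norm. -/
abbrev Ed (d : ℕ) := EuclideanSpace ℝ (Fin d)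

/-- A measure on `(ℝ^d)^N` is symmetric if it is invariant under all permutations
of the coordinates. -/
def IsSymmetricN {d N : ℕ} (γ : Measure (Fin N → Ed d)) : Prop :=
  ∀ σ : Equiv.Perm (Fin N), γ.map (fun x i => x (σ i)) = γ

/-- The `N`-body cost `Σ_{1 ≤ i < j ≤ N} c(x_i, x_j)`. -/
def pairCost {d N : ℕ} (c : Ed d → Ed d → ℝ≥0∞) (x : Fin N → Ed d) : ℝ≥0∞ :=
  ∑ i : Fin N, ∑ j : Fin N, if i < j then c (x i) (x j) else 0

/-- The optimal cost per particle pair of the `N`-body optimal transport problem: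
`F_N^OT[μ] = (1/binom(N,2)) inf { ∫ Σ_{i<j} c(x_i,x_j) dγ_N : γ_N ∈ P_sym^N(ℝ^d), γ_N ↦ μ }`. -/
def FNOT {d : ℕ} (N : ℕ) (c : Ed d → Ed d → ℝ≥0∞) (μ : Measure (Ed d)) : ℝ≥0∞ :=
  (N.choose 2 : ℝ≥0∞)⁻¹ *
    ⨅ (γ : Measure (Fin N → Ed d)) (_ : IsProbabilityMeasure γ) (_ : IsSymmetricN γ)
      (_ : ∀ i : Fin N, γ.map (fun x => x i) = μ), ∫⁻ x, pairCost c x ∂γ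

/-- `μ₂` is `N`-representable: it is the two-coordinate marginal of a symmetric
probability measure on `(ℝ^d)^N`. -/
def NRep {d : ℕ} (N : ℕ) (μ₂ : Measure (Ed d × Ed d)) : Prop :=
  ∃ γ : Measure (Fin N → Ed d), IsProbabilityMeasure γ ∧ IsSymmetricN γ ∧
    ∀ i j : Fin N, i ≠ j → γ.map (fun x => (x i, x j)) = μ₂

/-!
A lower semicontinuous `f ≥ 0` satisfies `∫ f dγ = ∫₀^∞ γ {f > t} dt` with `{f > t}` open, so by the
portmanteau theorem and Fatou's lemma `γ ↦ ∫ f dγ` is weakly lower semicontinuous. The exchangeable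
couplings with marginal `μ` form a weakly closed set that contains `μ^{⊗N}`, and they are tight
because their marginals are; by Prokhorov's theorem they form a compact set, on which the cost
attains its minimum. All pair marginals of an exchangeable measure coincide, so each of the
`binom(N,2)` terms of the cost has the same integral, and the pair marginal of a minimizer is `μ₂`.
-/

lemma volume_setOf_ofReal_lt (a : ℝ≥0∞) : volume {t : ℝ | 0 < t ∧ ENNReal.ofReal t < a} = a := by
  cases a with
  | top =>
    simp only [ofReal_lt_top, and_true]
    exact Real.volume_Ioi
  | coe r =>
    have h_eq : {t : ℝ | 0 < t ∧ ENNReal.ofReal t < r} = Set.Ioo 0 (r : ℝ) := by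
      ext t
      refine and_congr_right fun ht => ?_
      rw [ENNReal.ofReal_lt_iff_lt_toReal ht.le coe_ne_top, coe_toReal]
    rw [h_eq, Real.volume_Ioo, sub_zero, ofReal_coe_nnreal]

lemma lintegral_eq_lintegral_meas_ofReal_lt {X : Type*} [MeasurableSpace X] (ν : Measure X)
    [SFinite ν] {f : X → ℝ≥0∞} (hf : Measurable f) :
    ∫⁻ x, f x ∂ν = ∫⁻ t in Set.Ioi (0 : ℝ), ν {x | ENNReal.ofReal t < f x} := by
  have h_meas : MeasurableSet {p : X × ℝ | ENNReal.ofReal p.2 < f p.1} :=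
    measurableSet_lt (ENNReal.measurable_ofReal.comp measurable_snd) (hf.comp measurable_fst)
  have h_slice (x : X) :
      volume.restrict (Set.Ioi (0 : ℝ)) {t : ℝ | ENNReal.ofReal t < f x} = f x := by
    rw [Measure.restrict_apply (measurableSet_lt ENNReal.measurable_ofReal measurable_const),
      Set.inter_comm]
    exact volume_setOf_ofReal_lt (f x)
  calc ∫⁻ x, f x ∂ν
      = ∫⁻ x, volume.restrict (Set.Ioi (0 : ℝ)) {t : ℝ | ENNReal.ofReal t < f x} ∂ν := by
        simp only [h_slice]
    _ = (ν.prod (volume.restrict (Set.Ioi (0 : ℝ)))) {p | ENNReal.ofReal p.2 < f p.1} :=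
        (Measure.prod_apply h_meas).symm
    _ = ∫⁻ t in Set.Ioi (0 : ℝ), ν {x | ENNReal.ofReal t < f x} :=
        Measure.prod_apply_symm h_meas

lemma lowerSemicontinuous_lintegral_probabilityMeasure {X : Type*} [TopologicalSpace X]
    [TopologicalSpace.PseudoMetrizableSpace X] [TopologicalSpace.SeparableSpace X]
    [MeasurableSpace X] [BorelSpace X] {f : X → ℝ≥0∞} (hf : LowerSemicontinuous f) :
    LowerSemicontinuous fun γ : ProbabilityMeasure X => ∫⁻ x, f x ∂(γ : Measure X) := by
  simp only [lintegral_eq_lintegral_meas_ofReal_lt _ hf.measurable]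
  rw [lowerSemicontinuous_iff_le_liminf]
  intro γ
  have h_antitone (ν : ProbabilityMeasure X) :
      Antitone fun t : ℝ => (ν : Measure X) {x | ENNReal.ofReal t < f x} :=
    fun _ _ hst => measure_mono fun _ hx => (ENNReal.ofReal_le_ofReal hst).trans_lt hx
  calc ∫⁻ t in Set.Ioi (0 : ℝ), (γ : Measure X) {x | ENNReal.ofReal t < f x}
      ≤ ∫⁻ t in Set.Ioi (0 : ℝ),
          liminf (fun ν : ProbabilityMeasure X => (ν : Measure X) {x | ENNReal.ofReal t < f x})
            (𝓝 γ) :=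
        lintegral_mono fun _ =>
          ProbabilityMeasure.le_liminf_measure_open_of_tendsto tendsto_id (hf.isOpen_preimage _)
    _ ≤ liminf (fun ν : ProbabilityMeasure X =>
          ∫⁻ t in Set.Ioi (0 : ℝ), (ν : Measure X) {x | ENNReal.ofReal t < f x}) (𝓝 γ) :=
        lintegral_liminf_le fun ν => (h_antitone ν).measurable

lemma isTightMeasureSet_of_forall_map_eval {ι : Type*} [Countable ι] {X : ι → Type*}
    [∀ i, TopologicalSpace (X i)] [∀ i, MeasurableSpace (X i)] {S : Set (Measure (∀ i, X i))}
    (hS : ∀ i, IsTightMeasureSet ((fun γ => γ.map fun x => x i) '' S)) : IsTightMeasureSet S := by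
  simp only [isTightMeasureSet_iff_exists_isCompact_measure_compl_le, Set.forall_mem_image] at hS ⊢
  intro ε hε
  obtain ⟨δ, hδ_pos, hδ_sum⟩ := ENNReal.exists_pos_sum_of_countable' hε.ne' ι
  choose K hK_compact hK_le using fun i => hS i (δ i) (hδ_pos i)
  refine ⟨Set.univ.pi K, isCompact_univ_pi hK_compact, fun γ hγ => ?_⟩
  have h_compl : (Set.univ.pi K)ᶜ = ⋃ i, (fun x : ∀ i, X i => x i) ⁻¹' (K i)ᶜ := by
    ext x
    simp
  calc γ (Set.univ.pi K)ᶜ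
      ≤ ∑' i, γ ((fun x : ∀ i, X i => x i) ⁻¹' (K i)ᶜ) := h_compl ▸ measure_iUnion_le _
    _ ≤ ∑' i, γ.map (fun x : ∀ i, X i => x i) (K i)ᶜ :=
        ENNReal.tsum_le_tsum fun i => Measure.le_map_apply (measurable_pi_apply i).aemeasurable _
    _ ≤ ∑' i, δ i := ENNReal.tsum_le_tsum fun i => hK_le i hγ
    _ ≤ ε := hδ_sum.le

lemma isClosed_setOf_map_eq {X Y : Type*} [TopologicalSpace X] [MeasurableSpace X]
    [OpensMeasurableSpace X] [TopologicalSpace Y] [MeasurableSpace Y] [BorelSpace Y]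
    [HasOuterApproxClosed Y] {f : X → Y} (hf : Continuous f)
    {F : ProbabilityMeasure X → ProbabilityMeasure Y} (hF : Continuous F) :
    IsClosed {γ : ProbabilityMeasure X | (γ : Measure X).map f = F γ} := by
  simpa only [← ProbabilityMeasure.toMeasure_injective.eq_iff, ProbabilityMeasure.toMeasure_map]
    using isClosed_eq (ProbabilityMeasure.continuous_map hf) hF

/-- A measure on `X^ι` is exchangeable if it is invariant under all permutations of the coordinates;
on `(ℝ^d)^N` this is `IsSymmetricN`. -/
def IsExchangeable {ι X : Type*} [MeasurableSpace X] (γ : Measure (ι → X)) : Prop :=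
  ∀ σ : Equiv.Perm ι, γ.map (fun x i => x (σ i)) = γ

/-- The set of exchangeable probability measures on `X^ι` whose one-coordinate marginals are all
equal to `μ`, i.e. the admissible set of the symmetric multi-marginal transport problem. -/
def exchangeableCouplings (ι : Type*) {X : Type*} [MeasurableSpace X] (μ : Measure X) :
    Set (ProbabilityMeasure (ι → X)) :=
  {γ | IsExchangeable (γ : Measure (ι → X)) ∧
    ∀ i, (γ : Measure (ι → X)).map (fun x => x i) = μ}

section Exchangeable

variable {ι X : Type*} [MeasurableSpace X]

lemma IsExchangeable.map_pair_eq {γ : Measure (ι → X)} (hγ : IsExchangeable γ) {i j k l : ι}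
    (hij : i ≠ j) (hkl : k ≠ l) :
    γ.map (fun x => (x i, x j)) = γ.map (fun x => (x k, x l)) := by
  obtain ⟨σ, hσk, hσl⟩ : ∃ σ : Equiv.Perm ι, σ k = i ∧ σ l = j :=
    MulAction.is_two_pretransitive_iff.1 (Equiv.Perm.isMultiplyPretransitive ι 2) hkl hij
  have h_meas : Measurable fun x : ι → X => (x k, x l) := by fun_prop
  have h_perm : Measurable fun (x : ι → X) i => x (σ i) := by fun_prop
  conv_rhs => rw [← hγ σ, Measure.map_map h_meas h_perm]
  simp only [Function.comp_def, hσk, hσl]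

lemma isExchangeable_infinitePi (μ : Measure X) [IsProbabilityMeasure μ] :
    IsExchangeable (Measure.infinitePi fun _ : ι => μ) := by
  intro σ
  have h_reindex : (MeasurableEquiv.piCongrLeft (fun _ : ι => X) σ.symm : (ι → X) → ι → X) =
      fun x i => x (σ i) := by
    ext x i
    rw [MeasurableEquiv.coe_piCongrLeft]
    simpa using Equiv.piCongrLeft_apply_apply (fun _ : ι => X) σ.symm x (σ i)
  rw [← h_reindex]
  exact Measure.infinitePi_map_piCongrLeft (fun _ => μ) σ.symm

lemma exchangeableCouplings_nonempty (μ : Measure X) [IsProbabilityMeasure μ] :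
    (exchangeableCouplings ι μ).Nonempty :=
  ⟨⟨Measure.infinitePi fun _ => μ, inferInstance⟩, isExchangeable_infinitePi μ,
    Measure.infinitePi_map_eval fun _ => μ⟩

variable [Countable ι] [TopologicalSpace X] [BorelSpace X]

lemma isClosed_exchangeableCouplings [TopologicalSpace.PseudoMetrizableSpace X]
    [SecondCountableTopology X] (μ : Measure X) [IsProbabilityMeasure μ] :
    IsClosed (exchangeableCouplings ι μ) := by
  let ν : ProbabilityMeasure X := ⟨μ, inferInstance⟩
  have h_marginal (i : ι) :
      IsClosed {γ : ProbabilityMeasure (ι → X) | (γ : Measure (ι → X)).map (fun x => x i) = ν} :=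
    isClosed_setOf_map_eq (f := fun x : ι → X => x i) (F := fun _ => ν) (by fun_prop)
      continuous_const
  simp only [exchangeableCouplings, IsExchangeable, Set.ofPred_and, Set.ofPred_forall]
  exact (isClosed_iInter fun σ => isClosed_setOf_map_eq (by fun_prop) continuous_id).inter
    (isClosed_iInter h_marginal)

variable [PolishSpace X]

lemma isCompact_exchangeableCouplings (μ : Measure X) [IsProbabilityMeasure μ] :
    IsCompact (exchangeableCouplings ι μ) := by
  rw [← (isClosed_exchangeableCouplings μ).closure_eq]
  refine isCompact_closure_of_isTightMeasureSet (isTightMeasureSet_of_forall_map_eval fun i => ?_)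
  refine (isTightMeasureSet_singleton (μ := μ)).subset ?_
  rintro _ ⟨_, ⟨γ, hγ, rfl⟩, rfl⟩
  exact hγ.2 i

lemma exists_isMinOn_lintegral_exchangeableCouplings {f : (ι → X) → ℝ≥0∞}
    (hf : LowerSemicontinuous f) (μ : Measure X) [IsProbabilityMeasure μ] :
    ∃ γ ∈ exchangeableCouplings ι μ,
      IsMinOn (fun γ : ProbabilityMeasure (ι → X) => ∫⁻ x, f x ∂(γ : Measure (ι → X)))
        (exchangeableCouplings ι μ) γ :=
  ((lowerSemicontinuous_lintegral_probabilityMeasure hf).lowerSemicontinuousOn _).exists_isMinOn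
    (exchangeableCouplings_nonempty μ) (isCompact_exchangeableCouplings μ)

end Exchangeable

/-- The total cost `Σ_{i < j} c(x_i, x_j)` of a configuration in `X^ι`, each pair being counted once
in the given order of `ι`; on `(ℝ^d)^N` this is `pairCost`. -/
def sumPairCost {ι X : Type*} [Fintype ι] [LinearOrder ι] (c : X → X → ℝ≥0∞) (x : ι → X) : ℝ≥0∞ :=
  ∑ i, ∑ j, if i < j then c (x i) (x j) else 0

section SumPairCost

variable {ι X : Type*} [Fintype ι] [LinearOrder ι] {c : X → X → ℝ≥0∞}

lemma sumPairCost_eq_sum_filter (c : X → X → ℝ≥0∞) (x : ι → X) :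
    sumPairCost c x = ∑ p : ι × ι with p.1 < p.2, c (x p.1) (x p.2) := by
  rw [sumPairCost, Finset.sum_filter, Fintype.sum_prod_type]

lemma lowerSemicontinuous_sumPairCost [TopologicalSpace X]
    (hc : LowerSemicontinuous fun p : X × X => c p.1 p.2) :
    LowerSemicontinuous (sumPairCost c : (ι → X) → ℝ≥0∞) := by
  simp only [funext (sumPairCost_eq_sum_filter c)]
  exact lowerSemicontinuous_sum fun p _ =>
    hc.comp (g := fun x : ι → X => (x p.1, x p.2)) (by fun_prop)

lemma IsExchangeable.lintegral_sumPairCost [MeasurableSpace X] {γ : Measure (ι → X)}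
    (hγ : IsExchangeable γ) (hc : Measurable fun p : X × X => c p.1 p.2) {i j : ι} (hij : i ≠ j) :
    ∫⁻ x, sumPairCost c x ∂γ =
      (Fintype.card ι).choose 2 * ∫⁻ p, c p.1 p.2 ∂γ.map (fun x => (x i, x j)) := by
  have h_pair (p : ι × ι) : Measurable fun x : ι → X => (x p.1, x p.2) := by fun_prop
  calc ∫⁻ x, sumPairCost c x ∂γ
      = ∑ p : ι × ι with p.1 < p.2, ∫⁻ x, c (x p.1) (x p.2) ∂γ := by
        simp only [sumPairCost_eq_sum_filter]
        exact lintegral_finsetSum _ fun p _ => hc.comp (h_pair p)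
    _ = ∑ p : ι × ι with p.1 < p.2, ∫⁻ q, c q.1 q.2 ∂γ.map (fun x => (x i, x j)) := by
        refine Finset.sum_congr rfl fun p hp => ?_
        rw [hγ.map_pair_eq hij (Finset.mem_filter.1 hp).2.ne, lintegral_map hc (h_pair p)]
    _ = (Fintype.card ι).choose 2 * ∫⁻ p, c p.1 p.2 ∂γ.map (fun x => (x i, x j)) := by
        rw [Finset.sum_const, nsmul_eq_mul, ← Finset.univ_product_univ,
          Finset.card_product_filter_lt, Finset.card_univ]

end SumPairCost

/-- The optimal cost per pair of the `N`-body transport problem on `X`; for `X = ℝ^d` this is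
`FNOT`. -/
def optimalPairCost {X : Type*} [MeasurableSpace X] (N : ℕ) (c : X → X → ℝ≥0∞) (μ : Measure X) :
    ℝ≥0∞ :=
  (N.choose 2 : ℝ≥0∞)⁻¹ *
    ⨅ (γ : Measure (Fin N → X)) (_ : IsProbabilityMeasure γ) (_ : IsExchangeable γ)
      (_ : ∀ i : Fin N, γ.map (fun x => x i) = μ), ∫⁻ x, sumPairCost c x ∂γ

/-- `μ₂` is the common two-coordinate marginal of an exchangeable probability measure on `X^N`; for
`X = ℝ^d` this is `NRep`. -/
def IsRepresentable {X : Type*} [MeasurableSpace X] (N : ℕ) (μ₂ : Measure (X × X)) : Prop :=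
  ∃ γ : Measure (Fin N → X), IsProbabilityMeasure γ ∧ IsExchangeable γ ∧
    ∀ i j : Fin N, i ≠ j → γ.map (fun x => (x i, x j)) = μ₂

section NBody

variable {X : Type*} [MeasurableSpace X] {N : ℕ} {c : X → X → ℝ≥0∞} {μ : Measure X}

lemma lintegral_sumPairCost_eq_optimalPairCost_of_isMinOn {γ : ProbabilityMeasure (Fin N → X)}
    (hγ : γ ∈ exchangeableCouplings (Fin N) μ)
    (hmin : IsMinOn
      (fun γ : ProbabilityMeasure (Fin N → X) => ∫⁻ x, sumPairCost c x ∂(γ : Measure (Fin N → X)))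
      (exchangeableCouplings (Fin N) μ) γ) :
    (N.choose 2 : ℝ≥0∞)⁻¹ * ∫⁻ x, sumPairCost c x ∂(γ : Measure (Fin N → X)) =
      optimalPairCost N c μ := by
  rw [optimalPairCost]
  congr 1
  apply le_antisymm
  · simp only [le_iInf_iff]
    intro γ' hprob hexch hmarg
    exact hmin (show ⟨γ', hprob⟩ ∈ exchangeableCouplings (Fin N) μ from ⟨hexch, hmarg⟩)
  · exact iInf_le_of_le γ <| iInf_le_of_le inferInstance <| iInf₂_le hγ.1 hγ.2

lemma IsExchangeable.lintegral_map_pair_eq {γ : Measure (Fin N → X)} (hγ : IsExchangeable γ)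
    (hc : Measurable fun p : X × X => c p.1 p.2) {i j : Fin N} (hij : i ≠ j) :
    ∫⁻ p, c p.1 p.2 ∂γ.map (fun x => (x i, x j)) =
      (N.choose 2 : ℝ≥0∞)⁻¹ * ∫⁻ x, sumPairCost c x ∂γ := by
  have h_two_le : 2 ≤ N := by omega
  have h_choose : (N.choose 2 : ℝ≥0∞) ≠ 0 := Nat.cast_ne_zero.2 (Nat.choose_pos h_two_le).ne'
  rw [hγ.lintegral_sumPairCost hc hij, Fintype.card_fin,
    ENNReal.inv_mul_cancel_left h_choose (natCast_ne_top _)]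

end NBody

theorem N_body_OT_minimizer_exists_general
    {X : Type*} [TopologicalSpace X] [PolishSpace X] [MeasurableSpace X] [BorelSpace X]
    (N : ℕ) (hN : 2 ≤ N) (c : X → X → ℝ≥0∞)
    (hlsc : LowerSemicontinuous fun p : X × X => c p.1 p.2)
    (μ : Measure X) [IsProbabilityMeasure μ] :
    (∃ γ : Measure (Fin N → X), IsProbabilityMeasure γ ∧ IsExchangeable γ ∧
      (∀ i : Fin N, γ.map (fun x => x i) = μ) ∧
      (N.choose 2 : ℝ≥0∞)⁻¹ * ∫⁻ x, sumPairCost c x ∂γ = optimalPairCost N c μ) ∧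
    (∃ μ₂ : Measure (X × X), IsProbabilityMeasure μ₂ ∧
      μ₂.map Prod.swap = μ₂ ∧ μ₂.map Prod.fst = μ ∧ μ₂.map Prod.snd = μ ∧
      IsRepresentable N μ₂ ∧ ∫⁻ p, c p.1 p.2 ∂μ₂ = optimalPairCost N c μ) := by
  obtain ⟨γ, hγ, hmin⟩ :=
    exists_isMinOn_lintegral_exchangeableCouplings
      (lowerSemicontinuous_sumPairCost (ι := Fin N) hlsc) μ
  have hopt := lintegral_sumPairCost_eq_optimalPairCost_of_isMinOn hγ hmin
  obtain ⟨hexch, hmarg⟩ := hγ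
  refine ⟨⟨γ, inferInstance, hexch, hmarg, hopt⟩, ?_⟩
  obtain ⟨i, j, hij⟩ : ∃ i j : Fin N, i ≠ j := (Fin.nontrivial_iff_two_le.2 hN).exists_pair_ne
  have h_pair : Measurable fun x : Fin N → X => (x i, x j) := by fun_prop
  refine ⟨(γ : Measure (Fin N → X)).map fun x => (x i, x j),
    Measure.isProbabilityMeasure_map h_pair.aemeasurable, ?_, ?_, ?_,
    ⟨γ, inferInstance, hexch, fun k l hkl => hexch.map_pair_eq hkl hij⟩,
    (hexch.lintegral_map_pair_eq hlsc.measurable hij).trans hopt⟩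
  · exact (Measure.map_map measurable_swap h_pair).trans (hexch.map_pair_eq hij.symm hij)
  · exact (Measure.map_map measurable_fst h_pair).trans (hmarg i)
  · exact (Measure.map_map measurable_snd h_pair).trans (hmarg j)

/-- Proposition 3.1 (existence of minimizers of the `N`-body OT problem): for a
symmetric, Borel measurable, lower semi-continuous cost there is a symmetric
`γ_N` with all one-coordinate marginals `μ` attaining the infimum defining
`F_N^OT[μ]`, and an `N`-representable pair measure `μ₂` with marginals `μ` and
`∫ c dμ₂ = F_N^OT[μ]`. -/
theorem N_body_OT_minimizer_exists
    {d : ℕ} (N : ℕ) (hN : 2 ≤ N) (c : Ed d → Ed d → ℝ≥0∞)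
    (hmeas : Measurable fun p : Ed d × Ed d => c p.1 p.2)
    (hsymm : ∀ x y, c x y = c y x)
    (hlsc : LowerSemicontinuous fun p : Ed d × Ed d => c p.1 p.2)
    (μ : Measure (Ed d)) [IsProbabilityMeasure μ] :
    (∃ γ : Measure (Fin N → Ed d), IsProbabilityMeasure γ ∧ IsSymmetricN γ ∧
      (∀ i : Fin N, γ.map (fun x => x i) = μ) ∧
      (N.choose 2 : ℝ≥0∞)⁻¹ * ∫⁻ x, pairCost c x ∂γ = FNOT N c μ) ∧
    (∃ μ₂ : Measure (Ed d × Ed d), IsProbabilityMeasure μ₂ ∧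
      μ₂.map Prod.swap = μ₂ ∧ μ₂.map Prod.fst = μ ∧ μ₂.map Prod.snd = μ ∧
      NRep N μ₂ ∧ ∫⁻ p, c p.1 p.2 ∂μ₂ = FNOT N c μ) :=
  N_body_OT_minimizer_exists_general N hN c hlsc μ
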